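/- Let M be a perfect minimal normal subgroup of a finite group G with C_G(M) = 1, so that M is a direct product of conjugates of a nonabelian simple group S. Let p be a prime dividing |S| and x a p-element of G. If all p-elements of the coset Mx are conjugate in G, then there exists a p-element u of Aut(S) such that all p-elements of the coset (Inn S)u are conjugate in Aut(S). -/

import Mathlib

/-!
The conclusion holds because its hypotheses are contradictory: if `M` is a perfect normal subgroup
of a finite group `G` and `p` divides `|M|`, then for no `p`-element `x` are the `p`-elements of
`Mx` all conjugate in `G`.

Let `Q` be a Sylow `p`-subgroup of `G` containing `x`, put `H = Q ∩ M ≠ 1`, and let `K = [H, Q]`,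
which is a proper subgroup of `H` because `Q` is nilpotent.

*A homomorphism detecting `H`* (`exists_hom`). There is a homomorphism `r` from `Q` to an abelian
group with `r h ≠ 1` for some `h ∈ H`. To build it, let `E` be the pullback of `G → G/M` and
`Q/K → G/M`, and let `S ≤ E` be the preimage of `Q`. Its index in `E` is prime to `p`. Sending
`(q, q'K)` to `q⁻¹q'K` is a homomorphism `S → Z(Q/K)`, since `H/K` is central in `Q/K`. Its transfer
`τ : E → Z(Q/K)` is trivial on `M × 1` because `M` is perfect, and raises the central element
`(1, hK)` to the power `|E : S|`. So `r(q) = τ(q, qK)` satisfies `r(h) = (hK)^|E : S|`, which is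
nontrivial for `h ∈ H \ K`.

*Counting* (`false_of_hom`). If the `p`-elements of `Mx` are all conjugate, then `zm` is conjugate
to `x` whenever `z ∈ Q` is conjugate to `x` and `m ∈ H`. For `y` conjugate to `x` let `a(y, c)` be
the number of cosets `tQ` with `t⁻¹yt ∈ Q` and `r(t⁻¹yt) = c`; this does not depend on `y`.
Counting pairs `(y, tQ)` in two ways expresses `a(x, c)` as a fixed multiple of the number of
conjugates `z ∈ Q` of `x` with `r(z) = c`, and `z ↦ zh` shows that this number is unchanged when `c`
is replaced by `c · r(h)`. Since `p` divides the order of `r(h)`, it divides `∑ c, a(x, c)`, the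
number of fixed points of `x` on `G/Q`. As `x` is a `p`-element, that number is congruent to
`|G : Q|` modulo `p`, which is a contradiction.
-/

/-- `a` is constant on the cosets of `⟨b⟩`, each of which has `orderOf b` elements. -/
theorem prime_dvd_sum_of_translate {p : ℕ} [Fact p.Prime] {C : Type*} [Group C] [Fintype C]
    (b : C) (hb : p ∣ orderOf b) (a : C → ℕ) (ha : ∀ c, a (c * b) = a c) :
    p ∣ ∑ c, a c := by
  classical
  have hz : ∀ k : ℕ, ∀ c, a (c * b ^ k) = a c := by
    intro k
    induction k with
    | zero => simp
    | succ k ih => intro c; rw [pow_succ, ← mul_assoc, ha, ih]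
  rw [← Finset.sum_fiberwise Finset.univ (fun c : C => (c : C ⧸ Subgroup.zpowers b)) a]
  refine Finset.dvd_sum fun q _ => ?_
  have hconst : ∀ c ∈ Finset.univ.filter (fun c : C => (c : C ⧸ Subgroup.zpowers b) = q),
      a c = a q.out := by
    intro c hc
    have hc' : (q.out : C ⧸ Subgroup.zpowers b) = c := by
      rw [(Finset.mem_filter.mp hc).2]; exact Quotient.out_eq' q
    have := QuotientGroup.eq.mp hc'
    obtain ⟨k, hk⟩ := (mem_powers_iff_mem_zpowers).mpr this
    have hk' : c = q.out * b ^ k := by rw [show b ^ k = _ from hk]; group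
    rw [hk', hz]
  rw [Finset.sum_const_nat hconst]
  refine Dvd.dvd.mul_right ?_ _
  have h1 : Nat.card ((QuotientGroup.mk : C → C ⧸ Subgroup.zpowers b) ⁻¹' {q}) = orderOf b := by
    rw [Nat.card_congr (QuotientGroup.preimageMkEquivSubgroupProdSet _ _)]
    rw [Nat.card_prod, Nat.card_zpowers, Nat.card_unique, mul_one]
  refine hb.trans (dvd_of_eq ?_)
  rw [← h1, Nat.card_eq_fintype_card, Fintype.card_ofFinset _ _]
  congr 1
  ext c
  simp

/-- The counting half of the argument. The hypothesis `hx` says that the class of `x`, intersected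
with `Q`, stays in that class under right multiplication by `H`; this is incompatible with a
homomorphism from `Q` to an abelian group that is nontrivial on `Q ∩ H`. -/
theorem false_of_hom {p : ℕ} [Fact p.Prime] {G : Type*} [Group G] [Finite G] (Q : Sylow p G)
    {C : Type*} [CommGroup C] [Finite C] (r : Q →* C) (H : Subgroup G)
    (h : Q) (hH : (h : G) ∈ H) (hr : r h ≠ 1) (x : G) (hxQ : x ∈ Q)
    (hx : ∀ z ∈ Q, IsConj x z → ∀ m ∈ H, IsConj x (z * m)) : False := by
  classical
  have := Fintype.ofFinite G
  have := Fintype.ofFinite C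
  -- `r` as a function on `G`, with value `none` outside `Q`
  let R : G → Option C := fun g => if hg : g ∈ Q then some (r ⟨g, hg⟩) else none
  have hRmem : ∀ g (hg : g ∈ Q), R g = some (r ⟨g, hg⟩) := fun g hg => dif_pos hg
  have hRnot : ∀ g, g ∉ Q → R g = none := fun g hg => dif_neg hg
  have hRsome : ∀ g c, R g = some c → g ∈ Q := by
    intro g c hg
    by_contra hn
    rw [hRnot g hn] at hg
    cases hg
  -- the target of `r` is commutative, so `r` is invariant under conjugation by `Q`
  have hRconj : ∀ g, ∀ q ∈ Q, R (q⁻¹ * g * q) = R g := by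
    intro g q hq
    by_cases hg : g ∈ Q
    · rw [hRmem g hg, hRmem _ (Q.mul_mem (Q.mul_mem (Q.inv_mem hq) hg) hq)]
      have : (⟨q⁻¹ * g * q, Q.mul_mem (Q.mul_mem (Q.inv_mem hq) hg) hq⟩ : Q)
          = ⟨q, hq⟩⁻¹ * ⟨g, hg⟩ * ⟨q, hq⟩ := rfl
      rw [this, map_mul, map_mul, map_inv, mul_comm (r ⟨q, hq⟩)⁻¹, inv_mul_cancel_right]
    · rw [hRnot g hg, hRnot]
      intro hn
      apply hg
      have := Q.mul_mem (Q.mul_mem hq hn) (Q.inv_mem hq)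
      rwa [show q * (q⁻¹ * g * q) * q⁻¹ = g by group] at this
  -- number of cosets `gQ` for which `g⁻¹yg` lies in `Q` and has image `c`
  let a : G → C → ℕ := fun y c =>
    ∑ t : G ⧸ (Q : Subgroup G), if R (t.out⁻¹ * y * t.out) = some c then 1 else 0
  have ha_conj : ∀ y, IsConj x y → ∀ c, a y c = a x c := by
    intro y hy c
    obtain ⟨s, rfl⟩ := isConj_iff.mp hy
    symm
    refine Fintype.sum_equiv (MulAction.toPerm s) _ _ fun t => ?_
    have h1 : ((s * t.out : G) : G ⧸ (Q : Subgroup G)) = s • t := by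
      conv_rhs => rw [← Quotient.out_eq' t]
      rfl
    obtain ⟨q, hq⟩ := QuotientGroup.mk_out_eq_mul (Q : Subgroup G) (s * t.out)
    rw [h1] at hq
    have h2 : R ((s • t).out⁻¹ * (s * x * s⁻¹) * (s • t).out) = R (t.out⁻¹ * x * t.out) := by
      rw [hq, ← hRconj (t.out⁻¹ * x * t.out) q q.2]
      congr 1
      group
    simp only [MulAction.toPerm_apply, h2]
  let n : C → ℕ := fun c => (Finset.univ.filter fun z => IsConj x z ∧ R z = some c).card
  -- double counting of the pairs `(y, tQ)` with `y` conjugate to `x`, via `z = t⁻¹yt`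
  have hsum : ∀ c, (Finset.univ.filter fun z => IsConj x z).card * a x c
      = Fintype.card (G ⧸ (Q : Subgroup G)) * n c := by
    intro c
    have e1 : ∑ y ∈ Finset.univ.filter (fun z => IsConj x z), a y c
        = (Finset.univ.filter fun z => IsConj x z).card * a x c :=
      Finset.sum_const_nat fun y hy => ha_conj y (Finset.mem_filter.mp hy).2 c
    rw [← e1, Finset.sum_comm, ← Finset.card_univ]
    refine Finset.sum_const_nat fun t _ => ?_
    rw [← Finset.card_filter, Finset.filter_filter]
    refine Finset.card_bij (fun y _ => t.out⁻¹ * y * t.out) ?_ ?_ ?_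
    · intro y hy
      simp only [Finset.mem_filter, Finset.mem_univ, true_and] at hy ⊢
      refine ⟨hy.1.trans ?_, hy.2⟩
      exact isConj_iff.mpr ⟨t.out⁻¹, by group⟩
    · intro y _ z _ hyz
      simpa using hyz
    · intro z hz
      simp only [Finset.mem_filter, Finset.mem_univ, true_and] at hz
      have e : t.out⁻¹ * (t.out * z * t.out⁻¹) * t.out = z := by group
      refine ⟨t.out * z * t.out⁻¹, ?_, e⟩
      simp only [Finset.mem_filter, Finset.mem_univ, true_and]
      rw [e]
      exact ⟨hz.1.trans (isConj_iff.mpr ⟨t.out, rfl⟩), hz.2⟩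
  have hn : ∀ c, n (c * r h) = n c := by
    intro c
    symm
    refine Finset.card_bij (fun z _ => z * h) ?_ ?_ ?_
    · intro z hz
      simp only [Finset.mem_filter, Finset.mem_univ, true_and] at hz ⊢
      have hzQ := hRsome z c hz.2
      refine ⟨hx z hzQ hz.1 h hH, ?_⟩
      rw [hRmem z hzQ, Option.some_inj] at hz
      rw [hRmem _ (Q.mul_mem hzQ h.2), ← hz.2, ← map_mul]
      rfl
    · intro y _ z _ hyz
      simpa using hyz
    · intro z hz
      simp only [Finset.mem_filter, Finset.mem_univ, true_and] at hz
      have hzQ := hRsome z _ hz.2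
      refine ⟨z * (h : G)⁻¹, ?_, by group⟩
      simp only [Finset.mem_filter, Finset.mem_univ, true_and]
      refine ⟨hx z hzQ hz.1 _ (H.inv_mem hH), ?_⟩
      rw [hRmem z hzQ, Option.some_inj] at hz
      rw [hRmem _ (Q.mul_mem hzQ (Q.inv_mem h.2)), Option.some_inj,
        ← mul_inv_eq_iff_eq_mul.mpr hz.2, ← map_inv, ← map_mul]
      rfl
  have ha : ∀ c, a x (c * r h) = a x c := by
    intro c
    have hpos : 0 < (Finset.univ.filter fun z => IsConj x z).card :=
      Finset.card_pos.mpr ⟨x, Finset.mem_filter.mpr ⟨Finset.mem_univ x, IsConj.refl x⟩⟩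
    apply Nat.eq_of_mul_eq_mul_left hpos
    rw [hsum, hsum, hn]
  have hord : p ∣ orderOf (r h) := by
    obtain ⟨k, hk⟩ := IsPGroup.iff_orderOf.mp Q.isPGroup' h
    obtain ⟨j, -, hj⟩ := (Nat.dvd_prime_pow Fact.out).mp (hk ▸ orderOf_map_dvd r h)
    rw [hj]
    refine dvd_pow_self p fun h0 => hr ?_
    rw [h0, pow_zero] at hj
    exact orderOf_eq_one_iff.mp hj
  have hdvd := prime_dvd_sum_of_translate (r h) hord (a x) ha
  -- the sum counts the cosets fixed by `x`
  have hfix : ∑ c, a x c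
      = Nat.card (MulAction.fixedPoints (Subgroup.zpowers x) (G ⧸ (Q : Subgroup G))) := by
    have e2 : ∑ c, a x c = (Finset.univ.filter fun t : G ⧸ (Q : Subgroup G) =>
        t.out⁻¹ * x * t.out ∈ Q).card := by
      rw [Finset.sum_comm, Finset.card_filter]
      refine Finset.sum_congr rfl fun t _ => ?_
      by_cases ht : t.out⁻¹ * x * t.out ∈ Q
      · simp [hRmem _ ht, ht]
      · simp [hRnot _ ht, ht]
    rw [e2, Nat.card_eq_fintype_card, Fintype.card_subtype]
    congr 1
    ext t
    simp only [Finset.mem_filter, Finset.mem_univ, true_and]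
    have h3 : x • t = ((x * t.out : G) : G ⧸ (Q : Subgroup G)) := by
      conv_lhs => rw [← Quotient.out_eq' t]
      rfl
    have h4 : t.out⁻¹ * x * t.out ∈ Q ↔ x • t = t := by
      rw [h3, eq_comm]
      nth_rewrite 3 [← Quotient.out_eq' t]
      rw [mul_assoc]
      exact (QuotientGroup.eq (s := (Q : Subgroup G))).symm
    rw [h4, MulAction.mem_fixedPoints]
    constructor
    · rintro ht ⟨m, hm⟩
      have : Subgroup.zpowers x ≤ MulAction.stabilizer G t := by
        rw [Subgroup.zpowers_le]; exact ht
      exact this hm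
    · intro ht
      exact ht ⟨x, Subgroup.mem_zpowers x⟩
  have hxp : IsPGroup p (Subgroup.zpowers x) :=
    Q.isPGroup'.to_le ((Subgroup.zpowers_le).mpr hxQ)
  have hmod := hxp.card_modEq_card_fixedPoints (G ⧸ (Q : Subgroup G))
  rw [← hfix] at hmod
  exact Q.not_dvd_index ((hmod.dvd_iff dvd_rfl).mpr hdvd)

theorem map_perfect {G A : Type*} [Group G] [CommGroup A] {M : Subgroup G}
    (hperf : ⁅M, M⁆ = M) (f : M →* A) (m : M) : f m = 1 := by
  have h1 : commutator M = ⊤ := by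
    apply Subgroup.map_injective M.subtype_injective
    rw [Subgroup.map_subtype_commutator, hperf, ← MonoidHom.range_eq_map, Subgroup.range_subtype]
  have h2 : m ∈ commutator M := h1 ▸ Subgroup.mem_top m
  exact Abelianization.commutator_subset_ker f h2

open Subgroup in
/-- The transfer half of the argument: a perfect normal subgroup `M` meeting the Sylow subgroup `Q`
nontrivially contains an element of `Q` that survives in some abelian quotient of `Q`. -/
theorem exists_hom.{u} {p : ℕ} [Fact p.Prime] {G : Type u} [Group G] [Finite G]
    (M : Subgroup G) [M.Normal] (hperf : ⁅M, M⁆ = M) (Q : Sylow p G)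
    (hne : M.subgroupOf Q ≠ ⊥) :
    ∃ (C : Type u) (_ : CommGroup C) (_ : Finite C) (r : Q →* C) (h : Q),
      (h : G) ∈ M ∧ r h ≠ 1 := by
  let H : Subgroup Q := M.subgroupOf Q
  let K : Subgroup Q := ⁅H, ⊤⁆
  have hKH : K ≤ H := commutator_le_left _ _
  -- otherwise `H` lies in every term of the lower central series of the nilpotent group `Q`
  obtain ⟨h, hhH, hhK⟩ : ∃ h ∈ H, h ∉ K := by
    by_contra! hcon
    have hle : ∀ n, H ≤ (⊤ : Subgroup Q).lowerCentralSeries n := by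
      intro n
      induction n with
      | zero => exact le_top
      | succ n ih =>
        have : K ≤ _ := commutator_mono ih (le_refl (⊤ : Subgroup Q))
        exact (show H ≤ K from hcon).trans this
    have hnil : Group.IsNilpotent Q := Q.isPGroup'.isNilpotent
    obtain ⟨n, hn⟩ := Subgroup.nilpotent_iff_lowerCentralSeries.mp hnil
    exact hne (le_bot_iff.mp (hn ▸ hle n))
  let π : Q →* Q ⧸ K := QuotientGroup.mk' K
  have hcen : ∀ k ∈ H, π k ∈ center (Q ⧸ K) := by
    intro k hk
    rw [mem_center_iff]
    intro q
    obtain ⟨q, rfl⟩ := QuotientGroup.mk'_surjective K q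
    rw [← map_mul, ← map_mul]
    refine QuotientGroup.eq.mpr ?_
    have := commutator_mem_commutator (inv_mem hk) (mem_top (q⁻¹))
    rw [commutatorElement_def, inv_inv, inv_inv] at this
    rwa [mul_inv_rev, ← mul_assoc]
  -- `Q ⧸ K → G ⧸ M`, whose kernel `H ⧸ K` is central
  let α : Q ⧸ K →* G ⧸ M := QuotientGroup.lift K ((QuotientGroup.mk' M).comp (Q : Subgroup G).subtype)
    (fun k hk => (QuotientGroup.eq_one_iff (N := M) (k : G)).mpr (hKH hk))
  have hα : ∀ q : Q, α (π q) = ((q : G) : G ⧸ M) := fun q => rfl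
  have hker : ∀ z, α z = 1 → z ∈ center (Q ⧸ K) := by
    intro z hz
    obtain ⟨q, rfl⟩ := QuotientGroup.mk'_surjective K z
    exact hcen q ((QuotientGroup.eq_one_iff (N := M) (q : G)).mp hz)
  let instC : CommGroup (center (Q ⧸ K)) :=
    { (center (Q ⧸ K)).toGroup with
      mul_comm := fun a b => Subtype.ext (mem_center_iff.mp b.2 a) }
  -- the pullback of `Q ⧸ K → G ⧸ M` along `G → G ⧸ M`
  let E : Subgroup (G × (Q ⧸ K)) :=
    ((QuotientGroup.mk' M).comp (MonoidHom.fst G (Q ⧸ K))).eqLocus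
      (α.comp (MonoidHom.snd G (Q ⧸ K)))
  have hE : ∀ z : G × (Q ⧸ K), z ∈ E ↔ ((z.1 : G) : G ⧸ M) = α z.2 := fun z => Iff.rfl
  let f₁ : E →* G := (MonoidHom.fst G (Q ⧸ K)).comp E.subtype
  let S : Subgroup E := (Q : Subgroup G).comap f₁
  have hS : ∀ s : S, s.1.1.1 ∈ (Q : Subgroup G) := fun s => s.2
  have hρmem : ∀ s : S, (π ⟨s.1.1.1, hS s⟩)⁻¹ * s.1.1.2 ∈ center (Q ⧸ K) := by
    intro s
    apply hker
    rw [map_mul, map_inv, hα, ← (hE s.1.1).mp s.1.2, inv_mul_cancel]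
  -- the difference of the two maps `S → Q ⧸ K`, multiplicative because its values are central
  let ρ : S →* center (Q ⧸ K) :=
    { toFun := fun s => ⟨(π ⟨s.1.1.1, hS s⟩)⁻¹ * s.1.1.2, hρmem s⟩
      map_one' := by
        apply Subtype.ext
        change (π 1)⁻¹ * 1 = 1
        simp
      map_mul' := by
        intro s t
        apply Subtype.ext
        change (π (⟨s.1.1.1, hS s⟩ * ⟨t.1.1.1, hS t⟩))⁻¹ * (s.1.1.2 * t.1.1.2)
          = ((π ⟨s.1.1.1, hS s⟩)⁻¹ * s.1.1.2) * ((π ⟨t.1.1.1, hS t⟩)⁻¹ * t.1.1.2)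
        have hc := mem_center_iff.mp (hρmem s) (π ⟨t.1.1.1, hS t⟩)⁻¹
        rw [map_mul, mul_inv_rev, ← mul_assoc ((π _)⁻¹ * s.1.1.2), ← hc]
        simp only [mul_assoc] }
  let τ : E →* center (Q ⧸ K) := ρ.transfer
  let δ : Q →* E :=
    { toFun := fun q => ⟨((q : G), π q), rfl⟩
      map_one' := rfl
      map_mul' := fun _ _ => rfl }
  refine ⟨center (Q ⧸ K), instC, inferInstance, τ.comp δ, h, hhH, ?_⟩
  let ι : M →* E :=
    { toFun := fun m => ⟨((m : G), 1), by
        rw [hE, map_one]; exact (QuotientGroup.eq_one_iff _).mpr m.2⟩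
      map_one' := rfl
      map_mul' := fun _ _ => Subtype.ext (Prod.ext rfl (mul_one _).symm) }
  have hz1 : α (π h) = 1 := (QuotientGroup.eq_one_iff _).mpr hhH
  let z : E := ⟨(1, π h), by rw [hE, hz1]; rfl⟩
  have hδ : δ h = ι ⟨h, hhH⟩ * z :=
    Subtype.ext (Prod.ext (mul_one _).symm (one_mul _).symm)
  have hzc : ∀ g : E, g * z = z * g := by
    intro g
    refine Subtype.ext (Prod.ext ((mul_one _).trans (one_mul _).symm) ?_)
    exact mem_center_iff.mp (hcen h hhH) g.1.2
  -- on the central element `z` the transfer is the power map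
  have hτz : τ z = ρ ⟨z ^ S.index, _⟩ := ρ.transfer_eq_pow z (by
    intro k g _
    have hgz : Commute g (z ^ k) := Commute.pow_right (hzc g) k
    rw [mul_assoc, ← hgz.eq, inv_mul_cancel_left])
  have hτι : τ (ι ⟨h, hhH⟩) = 1 := map_perfect hperf (τ.comp ι) _
  intro h1
  rw [MonoidHom.comp_apply, hδ, map_mul, hτι, one_mul, hτz] at h1
  have h2 : π h ^ S.index = 1 := by
    have h3 : (π _)⁻¹ * (z ^ S.index : E).1.2 = 1 := congrArg Subtype.val h1
    have h4 : (z ^ S.index : E).1 = (1, π h ^ S.index) := by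
      change ((1 : G), π h) ^ S.index = _
      rw [Prod.pow_mk, one_pow]
    have h5 : (⟨(z ^ S.index : E).1.1, by rw [h4]; exact one_mem _⟩ : Q) = 1 := by
      apply Subtype.ext
      change (z ^ S.index : E).1.1 = 1
      rw [h4]
    rw [h5, h4, map_one, inv_one, one_mul] at h3
    exact h3
  -- `E` maps into `G` with image containing `Q`, so `|E : S|` divides `|G : Q|`
  have hidx : ¬ p ∣ S.index := by
    intro hp
    rw [index_comap] at hp
    have hle : (Q : Subgroup G) ≤ f₁.range := fun q hq => ⟨δ ⟨q, hq⟩, rfl⟩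
    exact Q.not_dvd_index (hp.trans (relIndex_dvd_index_of_le hle))
  obtain ⟨k, hk⟩ := Q.isPGroup' h
  have h6 : π h ^ p ^ k = 1 := by rw [← map_pow, hk, map_one]
  have h7 : π h = 1 := by
    have hcop : Nat.Coprime S.index (p ^ k) :=
      ((Nat.Prime.coprime_iff_not_dvd Fact.out).mpr hidx).symm.pow_right k
    have := Nat.dvd_gcd (orderOf_dvd_of_pow_eq_one h2) (orderOf_dvd_of_pow_eq_one h6)
    rw [hcop.gcd_eq_one, Nat.dvd_one] at this
    exact orderOf_eq_one_iff.mp this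
  exact hhK ((QuotientGroup.eq_one_iff h).mp h7)

theorem subgroupOf_sylow_ne_bot {p : ℕ} [Fact p.Prime] {G : Type*} [Group G] [Finite G]
    (M : Subgroup G) [M.Normal] (hpM : p ∣ Nat.card M) (Q : Sylow p G) :
    M.subgroupOf Q ≠ ⊥ := by
  obtain ⟨y, hy⟩ := exists_prime_orderOf_dvd_card' p hpM
  have hyp : IsPGroup p (Subgroup.zpowers (y : G)) :=
    IsPGroup.of_card (n := 1) (by rw [Nat.card_zpowers, Subgroup.orderOf_coe, hy, pow_one])
  obtain ⟨P, hP⟩ := hyp.exists_le_sylow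
  obtain ⟨g, rfl⟩ := MulAction.exists_smul_eq G P Q
  have hyP : g * y * g⁻¹ ∈ g • P := ⟨y, hP (Subgroup.mem_zpowers _), rfl⟩
  intro hbot
  have hmem : (⟨g * y * g⁻¹, hyP⟩ : (g • P : Sylow p G)) ∈ M.subgroupOf (g • P : Sylow p G) :=
    Subgroup.Normal.conj_mem inferInstance _ y.2 g
  rw [hbot, Subgroup.mem_bot] at hmem
  have h1 : g * y * g⁻¹ = (1 : G) := congrArg Subtype.val hmem
  have h2 : y = 1 := Subtype.ext (conj_eq_one_iff.mp h1)
  rw [h2, orderOf_one] at hy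
  exact (Fact.out : p.Prime).one_lt.ne hy


/-- Lemma 3.6: let `M` be a perfect minimal normal subgroup of the finite group
`G` with trivial centralizer, so that `M` is the direct product of the
conjugates of a nonabelian simple subgroup `S` (in particular `M` is the normal
closure of `S`).  If `p` divides `|S|`, `x` is a `p`-element of `G` and all
`p`-elements of the coset `Mx` are conjugate in `G`, then there is a
`p`-element `u` of `Aut S` such that all `p`-elements of the coset `(Inn S)u`
are conjugate in `Aut S`. -/
theorem stmt9 {G : Type*} [Group G] [Fintype G] (p : ℕ) [Fact p.Prime]
    (M : Subgroup G) [M.Normal]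
    (hperf : ⁅M, M⁆ = M) (hnontriv : M ≠ ⊥)
    (hmin : ∀ B : Subgroup G, B.Normal → B ≤ M → B = ⊥ ∨ B = M)
    (hcent : Subgroup.centralizer (M : Set G) = ⊥)
    (S : Subgroup G) (hSM : S ≤ M) (hsimple : IsSimpleGroup S)
    (hnonab : ¬ ∀ a b : S, a * b = b * a)
    (hclosure : M = Subgroup.normalClosure (S : Set G))
    (hp : p ∣ Nat.card S)
    (x : G) (hx : ∃ k : ℕ, orderOf x = p ^ k)
    (hconj : ∀ m₁ ∈ M, ∀ m₂ ∈ M, (∃ k : ℕ, orderOf (m₁ * x) = p ^ k) →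
      (∃ k : ℕ, orderOf (m₂ * x) = p ^ k) → IsConj (m₁ * x) (m₂ * x)) :
    ∃ u : MulAut S, (∃ k : ℕ, orderOf u = p ^ k) ∧
      ∀ g₁ g₂ : MulAut S,
        g₁ * u⁻¹ ∈ (MulAut.conj : S →* MulAut S).range →
        g₂ * u⁻¹ ∈ (MulAut.conj : S →* MulAut S).range →
        (∃ k : ℕ, orderOf g₁ = p ^ k) → (∃ k : ℕ, orderOf g₂ = p ^ k) →
        IsConj g₁ g₂ := by
  exfalso
  have hpM : p ∣ Nat.card M := hp.trans (Subgroup.card_dvd_of_le hSM)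
  have hxp : IsPGroup p (Subgroup.zpowers x) := by
    obtain ⟨k, hk⟩ := hx
    exact IsPGroup.of_card ((Nat.card_zpowers x).trans hk)
  obtain ⟨Q, hQ⟩ := hxp.exists_le_sylow
  have hxQ : x ∈ Q := hQ (Subgroup.mem_zpowers x)
  obtain ⟨C, _, _, r, h, hhM, hr⟩ := exists_hom M hperf Q (subgroupOf_sylow_ne_bot M hpM Q)
  have hQp : ∀ z ∈ Q, ∃ k : ℕ, orderOf z = p ^ k := by
    intro z hz
    obtain ⟨k, hk⟩ := IsPGroup.iff_orderOf.mp Q.isPGroup' ⟨z, hz⟩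
    exact ⟨k, by rw [← hk, Subgroup.orderOf_mk]⟩
  refine false_of_hom Q r (Q ⊓ M) h ⟨h.2, hhM⟩ hr x hxQ ?_
  rintro z hzQ hxz m ⟨hmQ, hmM⟩
  obtain ⟨g, rfl⟩ := isConj_iff.mp hxz
  have hm' : x * (g⁻¹ * m * g) * x⁻¹ ∈ M :=
    Subgroup.Normal.conj_mem inferInstance _
      (by simpa using Subgroup.Normal.conj_mem (H := M) inferInstance m hmM g⁻¹) x
  -- `z * m = g (m' x) g⁻¹` with `m' ∈ M`
  have hzm : g * x * g⁻¹ * m = g * (x * (g⁻¹ * m * g) * x⁻¹ * x) * g⁻¹ := by group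
  have hord : ∃ k : ℕ, orderOf (x * (g⁻¹ * m * g) * x⁻¹ * x) = p ^ k := by
    obtain ⟨k, hk⟩ := hQp _ (Q.mul_mem hzQ hmQ)
    refine ⟨k, ?_⟩
    rw [← hk, hzm, ← MulAut.conj_apply]
    exact (orderOf_injective (MulAut.conj g).toMonoidHom (MulAut.conj g).injective _).symm
  have hc := hconj 1 M.one_mem _ hm' (by simpa using hx) hord
  rw [one_mul] at hc
  rw [hzm]
  exact hc.trans (isConj_iff.mpr ⟨g, rfl⟩)
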